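/- arXiv:1302.3859 — 2 statements merged into one kernel-verified Lean document; each statement's English description precedes it below -/
import Mathlib

section
/- Let d, k ∈ ℕ, let B be a positive semidefinite d×d complex matrix, and let a = (a_1,…,a_k) ∈ ℝ_{>0}^k. Then there exists a sequence G = (g_1,…,g_k) of vectors in ℂ^d with frame operator S_G = B and ‖g_i‖² = a_i for every i ∈ {1,…,k} if and only if a ≺ λ(B), where the two vectors are compared by padding the shorter one with zeros. -/
open Finset
open scoped ComplexOrder

noncomputable def sortAsc {m : ℕ} (x : Fin m → ℝ) : Fin m → ℝ :=
  x ∘ Tuple.sort x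

noncomputable def sortDesc {m : ℕ} (x : Fin m → ℝ) : Fin m → ℝ :=
  fun i => (x ∘ Tuple.sort x) i.rev

noncomputable def pad {k : ℕ} (x : Fin k → ℝ) (m : ℕ) : Fin m → ℝ :=
  fun i => if h : (i : ℕ) < k then x ⟨i, h⟩ else 0

/-- `MajorizedBy x y` means `x ≺ y`. -/
def MajorizedBy {m : ℕ} (x y : Fin m → ℝ) : Prop :=
  (∀ j : Fin m, ∑ i ∈ Finset.Iic j, sortDesc x i ≤ ∑ i ∈ Finset.Iic j, sortDesc y i) ∧
    ∑ i, x i = ∑ i, y i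

/-- Majorization of vectors of possibly different lengths, padding with zeros. -/
def MajorizedByPad {k m : ℕ} (x : Fin k → ℝ) (y : Fin m → ℝ) : Prop :=
  MajorizedBy (pad x (max k m)) (pad y (max k m))

/-- The frame operator `S_F = ∑ f_i f_i^*` of a finite sequence of vectors in `ℂ^d`. -/
noncomputable def frameOp {d n : ℕ} (F : Fin n → Fin d → ℂ) : Matrix (Fin d) (Fin d) ℂ :=
  ∑ l, Matrix.vecMulVec (F l) (star (F l))

/-- The squared norm `‖g‖²` of a vector in `ℂ^d`. -/
noncomputable def normSqVec {d : ℕ} (g : Fin d → ℂ) : ℝ :=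
  ∑ i, Complex.normSq (g i)

open scoped Classical in
/-- Eigenvalues of a (Hermitian) matrix arranged in decreasing order. -/
noncomputable def eigsDesc {d : ℕ} (S : Matrix (Fin d) (Fin d) ℂ) : Fin d → ℝ :=
  if h : S.IsHermitian then sortDesc h.eigenvalues else 0

open scoped Classical in
/-- Eigenvalues of a (Hermitian) matrix arranged in increasing order. -/
noncomputable def eigsAsc {d : ℕ} (S : Matrix (Fin d) (Fin d) ℂ) : Fin d → ℝ :=
  if h : S.IsHermitian then sortAsc h.eigenvalues else 0

/-- `Γ_d(a)`: non-increasing nonnegative vectors in `ℝ^d` majorizing `a`. -/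
def Gamma {k : ℕ} (d : ℕ) (a : Fin k → ℝ) : Set (Fin d → ℝ) :=
  {μ | Antitone μ ∧ (∀ i, 0 ≤ μ i) ∧ MajorizedByPad a μ}

/-- The convex potential `P_f = tr f(S) = ∑ f(λ_i(S))`. -/
noncomputable def potential {d : ℕ} (f : ℝ → ℝ) (S : Matrix (Fin d) (Fin d) ℂ) : ℝ :=
  ∑ i, f (eigsDesc S i)

/-- Final averages `Q_{j,r} = (1/(r-j)) (∑_{i=j+1}^k a_i + ∑_{i=j+1}^r λ_i)` (1-based). -/
noncomputable def finalAvg {d k : ℕ} (lam : Fin d → ℝ) (a : Fin k → ℝ) (j r : ℕ) : ℝ :=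
  ((∑ i : Fin k, if j ≤ (i : ℕ) then a i else 0) +
      (∑ i : Fin d, if j ≤ (i : ℕ) ∧ (i : ℕ) < r then lam i else 0)) / ((r : ℝ) - (j : ℝ))

/-- Initial averages: `initAvg lam a lo hi = P_{lo+1,hi}` (1-based), i.e. the average of
`h_i = λ_i + a_i` over the (0-based) index window `[lo, hi)`. -/
noncomputable def initAvg {d k : ℕ} (lam : Fin d → ℝ) (a : Fin k → ℝ) (lo hi : ℕ) : ℝ :=
  ((∑ i : Fin d, if lo ≤ (i : ℕ) ∧ (i : ℕ) < hi then lam i else 0) +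
      (∑ i : Fin k, if lo ≤ (i : ℕ) ∧ (i : ℕ) < hi then a i else 0)) / ((hi : ℝ) - (lo : ℝ))

/-- 1-based access to a vector indexed by `Fin d`. -/
noncomputable def get1 {d : ℕ} (lam : Fin d → ℝ) (i : ℕ) : ℝ :=
  if h : i - 1 < d then lam ⟨i - 1, h⟩ else 0

/-- The index `s` is feasible for the pair `(λ, a)`: the unique vector
`ν_s = (c·1_{r-s}, λ_{r+1},…,λ_d)` determined by the truncated data satisfies
`a^s ≺ ν_s - λ^s`. -/
def FeasibleIdx {d k : ℕ} (lam : Fin d → ℝ) (a : Fin k → ℝ) (s : ℕ) : Prop :=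
  ∃ r : ℕ, ∃ c : ℝ, s < r ∧ r ≤ d ∧ 0 < c ∧
    (∀ i : Fin d, s ≤ (i : ℕ) → (i : ℕ) < r → lam i ≤ c) ∧
    (∀ hrd : r < d, c ≤ lam ⟨r, hrd⟩) ∧
    ((r : ℝ) - (s : ℝ)) * c =
      (∑ i : Fin d, if s ≤ (i : ℕ) ∧ (i : ℕ) < r then lam i else 0) +
        (∑ i : Fin k, if s ≤ (i : ℕ) then a i else 0) ∧
    MajorizedByPad (fun i : Fin (k - s) => a ⟨s + (i : ℕ), by have := i.isLt; omega⟩)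
      (fun i : Fin (d - s) =>
        if s + (i : ℕ) < r then c - lam ⟨s + (i : ℕ), by have := i.isLt; omega⟩ else 0)

/-!
Write the vectors as the columns of a matrix `M`, so that `M * Mᴴ` is the frame operator and the
squared norms are the diagonal of `Mᴴ * M`. After a unitary change of coordinates `M * Mᴴ` is
`diagonal μ`, where `μ` lists the eigenvalues.

Necessity: the squared norms of the columns indexed by `s` add up to `∑ l, w l * μ l` with
`w l = (∑ i ∈ s, ‖M l i‖ ^ 2) / μ l ∈ [0, 1]`. Since `Mᴴ * diagonal μ⁻¹ * M` is a projection, its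
diagonal is at most `1`, so that `∑ l, w l ≤ #s`. Hence the sum is at most that of the `#s` largest
eigenvalues.

Sufficiency: the vectors `√(μ l) • e l`, together with zero vectors, have squared norms `μ` padded
with zeros. By Hardy, Littlewood and Pólya any vector majorized by it is reached by finitely many
T-transforms. A T-transform of the diagonal of `Mᴴ * M` is realized by replacing `M` with `M * U`
for a unitary `U`, which leaves `M * Mᴴ` unchanged: once a diagonal phase has made the entry at
`(i, j)` of the Gram matrix real, `U = √(1 - t) + √t I P` works for the permutation matrix `P` of
the swap of `i` and `j`.
-/

open Matrix Function

section Dominance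

variable {ι R 𝕜 : Type*}

/-- `x` is obtained from `y` by a T-transform of Hardy, Littlewood and Pólya: a convex combination
of `y` and of `y` with two coordinates swapped. -/
def IsTTransform [Ring R] [LE R] [DecidableEq ι] (y x : ι → R) : Prop :=
  ∃ (i j : ι) (t : R), 0 ≤ t ∧ t ≤ 1 ∧ x = fun l ↦ (1 - t) * y l + t * y (Equiv.swap i j l)

/-- The dominance order: every initial sum of `x` is at most that of `y`, and the totals agree.
For decreasing `x` and `y` this is majorization. -/
def DominatedBy [AddCommMonoid R] [LE R] [Fintype ι] [Preorder ι] [LocallyFiniteOrderBot ι]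
    (x y : ι → R) : Prop :=
  (∀ j, ∑ i ∈ Iic j, x i ≤ ∑ i ∈ Iic j, y i) ∧ ∑ i, x i = ∑ i, y i

lemma isTTransform_transfer [Field 𝕜] [LinearOrder 𝕜] [IsStrictOrderedRing 𝕜] [DecidableEq ι]
    {i j : ι} {δ : 𝕜} (y : ι → 𝕜) (hδ : 0 ≤ δ) (hδy : δ ≤ y i - y j) :
    IsTTransform y (y - Pi.single i δ + Pi.single j δ) := by
  have hdiff : 0 ≤ y i - y j := hδ.trans hδy
  have ht : δ / (y i - y j) * (y i - y j) = δ :=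
    div_mul_cancel_of_imp fun h ↦ le_antisymm (h ▸ hδy) hδ
  refine ⟨i, j, δ / (y i - y j), div_nonneg hδ hdiff, div_le_one_of_le₀ hδy hdiff, ?_⟩
  ext l
  simp only [Pi.add_apply, Pi.sub_apply, Pi.single_apply, Equiv.swap_apply_def]
  split_ifs <;> grind

namespace DominatedBy

variable [Fintype ι] [LinearOrder ι] [LocallyFiniteOrderBot ι] {j k : ι}

section Monoid

variable [AddCommMonoid R] [LinearOrder R] [IsOrderedCancelAddMonoid R] {x y : ι → R}

lemma exists_gt_of_ne (h : DominatedBy x y) (hne : x ≠ y) : ∃ k, y k < x k := by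
  by_contra! hle
  exact hne <| funext fun i ↦
    (Finset.sum_eq_sum_iff_of_le fun i _ ↦ hle i).mp h.2 i (mem_univ i)

lemma exists_lt_of_gt (h : DominatedBy x y) (hk : y k < x k) : ∃ j < k, x j < y j := by
  by_contra! hle
  refine (h.1 k).not_gt (Finset.sum_lt_sum (fun i hi ↦ ?_) ⟨k, mem_Iic.mpr le_rfl, hk⟩)
  obtain rfl | hik := (mem_Iic.mp hi).eq_or_lt
  exacts [hk.le, hle i hik]

lemma exists_surplus_deficit (h : DominatedBy x y) (hne : x ≠ y) :
    ∃ j k, j < k ∧ x j < y j ∧ y k < x k ∧ ∀ i < k, x i ≤ y i := by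
  obtain ⟨k, hk, hmin⟩ := exists_minimal_of_wellFoundedLT (fun k ↦ y k < x k)
    (h.exists_gt_of_ne hne)
  obtain ⟨j, hjk, hj⟩ := h.exists_lt_of_gt hk
  exact ⟨j, k, hjk, hj, hk, fun i hi ↦ not_lt.mp fun hlt ↦ (hmin hlt hi.le).not_gt hi⟩

end Monoid

lemma transfer [CommRing R] [LinearOrder R] [IsStrictOrderedRing R] {x y : ι → R} {δ : R}
    (h : DominatedBy x y) (hjk : j < k) (hle : ∀ i < k, x i ≤ y i) (hδ : δ ≤ y j - x j) :
    DominatedBy x (y - Pi.single j δ + Pi.single k δ) := by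
  have sum_transfer (s : Finset ι) :
      ∑ i ∈ s, (y - Pi.single j δ + Pi.single k δ : ι → R) i =
      ∑ i ∈ s, y i - (if j ∈ s then δ else 0) + if k ∈ s then δ else 0 := by
    simp [sum_add_distrib, sum_sub_distrib, Pi.single_apply]
  refine ⟨fun l ↦ ?_, by rw [sum_transfer]; simp [h.2]⟩
  rw [sum_transfer]
  simp only [mem_Iic]
  have hl := h.1 l
  by_cases hkl : k ≤ l
  · simpa [hkl, hjk.le.trans hkl] using hl
  by_cases hjl : j ≤ l
  · have surplus : y j - x j ≤ ∑ i ∈ Iic l, (y i - x i) :=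
      Finset.single_le_sum (f := fun i ↦ y i - x i)
        (fun i hi ↦ sub_nonneg.mpr <| hle i <| (mem_Iic.mp hi).trans_lt (not_le.mp hkl))
        (mem_Iic.mpr hjl)
    rw [sum_sub_distrib] at surplus
    simp only [hjl, hkl, if_true, if_false]
    linarith
  · simpa [hkl, hjl] using hl

variable [Field 𝕜] [LinearOrder 𝕜] [IsStrictOrderedRing 𝕜] {x y : ι → 𝕜}

lemma exists_isTTransform (h : DominatedBy x y) (hx : Antitone x) (hne : x ≠ y) :
    ∃ y', IsTTransform y y' ∧ DominatedBy x y' ∧ #{i | x i ≠ y' i} < #{i | x i ≠ y i} := by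
  obtain ⟨j, k, hjk, hj, hk, hle⟩ := h.exists_surplus_deficit hne
  have hxjk : x k ≤ x j := hx hjk.le
  -- The largest transfer keeping `y' j ≥ x j` and `y' k ≤ x k`: it settles coordinate `j` or `k`.
  set δ := min (y j - x j) (x k - y k)
  have hδj : δ ≤ y j - x j := min_le_left _ _
  have hδk : δ ≤ x k - y k := min_le_right _ _
  have hδ0 : 0 ≤ δ := le_min (by linarith) (by linarith)
  set y' := y - Pi.single j δ + Pi.single k δ with hy'
  have hy'j : y' j = y j - δ := by simp [hy', hjk.ne]
  have hy'k : y' k = y k + δ := by simp [hy', hjk.ne']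
  have hy'_of_ne (i : ι) (hij : i ≠ j) (hik : i ≠ k) : y' i = y i := by simp [hy', hij, hik]
  refine ⟨y', isTTransform_transfer y hδ0 (by linarith), h.transfer hjk hle hδj, ?_⟩
  have new_agreement : ∃ q, x q ≠ y q ∧ x q = y' q := by
    rcases min_choice (y j - x j) (x k - y k) with hmin | hmin
    · exact ⟨j, hj.ne, by linarith⟩
    · exact ⟨k, hk.ne', by linarith⟩
  have old_agreement (i : ι) (hi : x i = y i) : x i = y' i := by
    rw [hy'_of_ne i (fun hij ↦ hj.ne (hij ▸ hi)) (fun hik ↦ hk.ne' (hik ▸ hi)), hi]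
  refine card_lt_card <| (ssubset_iff_of_subset fun i ↦ ?_).mpr ?_
  · simpa using mt (old_agreement i)
  · simpa [and_comm] using new_agreement

theorem reflTransGen_isTTransform (h : DominatedBy x y) (hx : Antitone x) :
    Relation.ReflTransGen IsTTransform y x := by
  induction hn : #{i | x i ≠ y i} using Nat.strong_induction_on generalizing y with
  | _ n ih =>
    by_cases hne : x = y
    · rw [hne]
    · obtain ⟨y', hyy', hxy', hcard⟩ := h.exists_isTTransform hx hne
      exact .head hyy' (ih _ (hn ▸ hcard) hxy' rfl)

end DominatedBy

lemma sum_mul_comp_le_sum_Iic [CommRing R] [LinearOrder R] [IsStrictOrderedRing R] [LinearOrder ι]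
    [LocallyFiniteOrderBot ι] {κ : Type*} [Fintype κ] {j : ι} {z : ι → R}
    (hz : Antitone z) (hz0 : ∀ i, 0 ≤ z i) (e : κ ↪ ι) {w : κ → R}
    (hw0 : ∀ l, 0 ≤ w l) (hw1 : ∀ l, w l ≤ 1) (hw : ∑ l, w l ≤ #(Iic j)) :
    ∑ l, w l * z (e l) ≤ ∑ i ∈ Iic j, z i := by
  have excess : ∑ l, w l * (z (e l) - z j) ≤ ∑ i ∈ Iic j, (z i - z j) := calc
    ∑ l, w l * (z (e l) - z j) ≤ ∑ l, (z (e l) - z j)⁺ := sum_le_sum fun l _ ↦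
      (mul_le_mul_of_nonneg_left (le_posPart _) (hw0 l)).trans
        (mul_le_of_le_one_left (posPart_nonneg _) (hw1 l))
    _ = ∑ i ∈ univ.map e, (z i - z j)⁺ := (sum_map univ e fun i ↦ (z i - z j)⁺).symm
    _ ≤ ∑ i ∈ univ.map e ∪ Iic j, (z i - z j)⁺ :=
      sum_le_sum_of_subset_of_nonneg subset_union_left fun _ _ _ ↦ posPart_nonneg _
    _ = ∑ i ∈ Iic j, (z i - z j)⁺ := (sum_subset subset_union_right fun i _ hi ↦
      posPart_eq_zero.mpr <| sub_nonpos.mpr <| hz (not_le.mp fun h ↦ hi (mem_Iic.mpr h)).le).symm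
    _ = ∑ i ∈ Iic j, (z i - z j) := sum_congr rfl fun i hi ↦
      posPart_eq_self.mpr <| sub_nonneg.mpr <| hz (mem_Iic.mp hi)
  simp only [mul_sub, sum_sub_distrib, ← sum_mul, sum_const, nsmul_eq_mul] at excess
  linarith [mul_le_mul_of_nonneg_right hw (hz0 j)]

end Dominance

section ZeroPadding

variable {ι κ τ R : Type*} [Zero R] {z : ι → R} {x : κ → R}

/-- `z` is a rearrangement of `x` padded with zeros. -/
def IsZeroPadding (z : ι → R) (x : κ → R) : Prop :=
  ∃ e : κ ↪ ι, z ∘ e = x ∧ ∀ i ∉ Set.range e, z i = 0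

lemma isZeroPadding_comp_equiv (x : κ → R) (σ : ι ≃ κ) : IsZeroPadding (x ∘ σ) x :=
  ⟨σ.symm.toEmbedding, by ext; simp, fun i hi ↦ (hi ⟨σ i, by simp⟩).elim⟩

lemma IsZeroPadding.trans {y : τ → R} (hz : IsZeroPadding z x) (hx : IsZeroPadding x y) :
    IsZeroPadding z y := by
  obtain ⟨e, rfl, hze⟩ := hz
  obtain ⟨f, rfl, hf⟩ := hx
  refine ⟨f.trans e, rfl, fun i hi ↦ ?_⟩
  by_cases hie : i ∈ Set.range e
  · obtain ⟨l, rfl⟩ := hie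
    exact hf l fun ⟨q, hq⟩ ↦ hi ⟨q, congrArg e hq⟩
  · exact hze i hie

lemma IsZeroPadding.nonneg [Preorder R] (hz : IsZeroPadding z x) (hx : ∀ l, 0 ≤ x l) (i : ι) :
    0 ≤ z i := by
  obtain ⟨e, rfl, hze⟩ := hz
  by_cases hi : i ∈ Set.range e
  · obtain ⟨l, rfl⟩ := hi
    exact hx l
  · exact (hze i hi).ge

lemma IsZeroPadding.sum_eq {R : Type*} [AddCommMonoid R] [Fintype ι] [Fintype κ] {z : ι → R}
    {x : κ → R} (hz : IsZeroPadding z x) : ∑ i, z i = ∑ l, x l := by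
  obtain ⟨e, rfl, hze⟩ := hz
  exact (Fintype.sum_of_injective e e.injective _ _ hze fun _ ↦ rfl).symm

end ZeroPadding

section Sorting

variable {k m : ℕ} (x : Fin m → ℝ)

lemma sortDesc_antitone : Antitone (sortDesc x) :=
  fun _ _ hij ↦ Tuple.monotone_sort x (Fin.rev_le_rev.mpr hij)

lemma isZeroPadding_sortDesc : IsZeroPadding (sortDesc x) x :=
  isZeroPadding_comp_equiv x (Fin.revPerm.trans (Tuple.sort x))

lemma isZeroPadding_pad (h : m ≤ k) : IsZeroPadding (pad x k) x :=
  ⟨Fin.castLEEmb h, by ext i; simp [pad],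
    fun i hi ↦ dif_neg fun him ↦ hi ⟨⟨i, him⟩, rfl⟩⟩

lemma isZeroPadding_sortDesc_pad (h : m ≤ k) : IsZeroPadding (sortDesc (pad x k)) x :=
  (isZeroPadding_sortDesc _).trans (isZeroPadding_pad x h)

lemma majorizedBy_iff_dominatedBy_sortDesc (y : Fin m → ℝ) :
    MajorizedBy x y ↔ DominatedBy (sortDesc x) (sortDesc y) := by
  rw [MajorizedBy, DominatedBy, (isZeroPadding_sortDesc x).sum_eq,
    (isZeroPadding_sortDesc y).sum_eq]

lemma isZeroPadding_eigsDesc {d : ℕ} {S : Matrix (Fin d) (Fin d) ℂ} (hS : S.IsHermitian) :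
    IsZeroPadding (eigsDesc S) hS.eigenvalues := by
  rw [eigsDesc, dif_pos hS]
  exact isZeroPadding_sortDesc _

end Sorting

section FrameNorms

variable {ι κ n 𝕜 : Type*} [Fintype n] [RCLike 𝕜]

lemma gram_diag_eq_ofReal_iff {M : Matrix n ι 𝕜} {i : ι} {r : ℝ} :
    (Mᴴ * M) i i = r ↔ ∑ l, ‖M l i‖ ^ 2 = r := by
  simp only [mul_apply, conjTranspose_apply, RCLike.star_def, RCLike.conj_mul]
  norm_cast

variable [Fintype ι]

/-- `x` lists the squared norms of a finite family of vectors with frame operator `S`. The vectors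
are the columns of the matrix `M`, so that `M * Mᴴ` is their frame operator and `Mᴴ * M` their Gram
matrix. -/
def IsFrameNormSq (S : Matrix n n 𝕜) (x : ι → ℝ) : Prop :=
  ∃ M : Matrix n ι 𝕜, M * Mᴴ = S ∧ ∀ i, (Mᴴ * M) i i = x i

lemma exists_frameOp_eq_iff_isFrameNormSq {d k : ℕ} {B : Matrix (Fin d) (Fin d) ℂ}
    {a : Fin k → ℝ} :
    (∃ G : Fin k → Fin d → ℂ, frameOp G = B ∧ ∀ i, normSqVec (G i) = a i) ↔
      IsFrameNormSq B a := by
  have columns_surjective : Surjective fun G : Fin k → Fin d → ℂ ↦ (of G)ᵀ :=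
    fun M ↦ ⟨of.symm Mᵀ, rfl⟩
  rw [IsFrameNormSq, columns_surjective.exists]
  refine exists_congr fun G ↦ and_congr (Eq.congr_left ?_) (forall_congr' fun i ↦ ?_)
  · ext
    simp [frameOp, Matrix.sum_apply, Matrix.mul_apply, vecMulVec_apply]
  · rw [gram_diag_eq_ofReal_iff]
    simp [normSqVec, Complex.normSq_eq_norm_sq]

variable {S : Matrix n n 𝕜} {x : ι → ℝ}

namespace IsFrameNormSq

lemma sum_eq_trace (h : IsFrameNormSq S x) : ((∑ i, x i : ℝ) : 𝕜) = S.trace := by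
  obtain ⟨M, rfl, hx⟩ := h
  rw [trace_mul_comm, trace]
  push_cast
  exact sum_congr rfl fun i _ ↦ (hx i).symm

lemma unitary_conj [DecidableEq n] (h : IsFrameNormSq S x) (U : unitaryGroup n 𝕜) :
    IsFrameNormSq ((U : Matrix n n 𝕜) * S * star (U : Matrix n n 𝕜)) x := by
  obtain ⟨M, rfl, hx⟩ := h
  refine ⟨(U : Matrix n n 𝕜) * M, ?_, fun i ↦ ?_⟩
  · simp only [conjTranspose_mul, star_eq_conjTranspose, Matrix.mul_assoc]
  · rw [← hx i, conjTranspose_mul, Matrix.mul_assoc, ← Matrix.mul_assoc (_)ᴴ (U : Matrix n n 𝕜),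
      ← star_eq_conjTranspose (U : Matrix n n 𝕜), Unitary.coe_star_mul_self, Matrix.one_mul]

end IsFrameNormSq

lemma IsZeroPadding.isFrameNormSq_iff [Fintype κ] {y : κ → ℝ} (h : IsZeroPadding x y) :
    IsFrameNormSq S x ↔ IsFrameNormSq S y := by
  classical
  obtain ⟨e, rfl, hx⟩ := h
  have frame_restrict {M : Matrix n ι 𝕜} (hM : ∀ i ∉ Set.range e, ∀ l, M l i = 0) :
      M.submatrix id e * (M.submatrix id e)ᴴ = M * Mᴴ := by
    ext l l'
    exact Fintype.sum_of_injective e e.injective _ _ (fun i hi ↦ by simp [hM i hi]) fun _ ↦ rfl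
  constructor
  · rintro ⟨M, rfl, hM⟩
    refine ⟨M.submatrix id e, frame_restrict fun i hi l ↦ ?_, fun l ↦ hM (e l)⟩
    have column_norm : ∑ l, ‖M l i‖ ^ 2 = x i := gram_diag_eq_ofReal_iff.mp (hM i)
    rw [hx i hi, sum_eq_zero_iff_of_nonneg fun _ _ ↦ by positivity] at column_norm
    simpa using column_norm l (mem_univ l)
  · rintro ⟨N, rfl, hN⟩
    set M : Matrix n ι 𝕜 := of fun l ↦ extend e (N l) 0
    have hM (i : ι) (hi : i ∉ Set.range e) (l : n) : M l i = 0 := extend_apply' _ _ _ hi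
    have hMN : M.submatrix id e = N := by
      ext l i
      exact e.injective.extend_apply _ _ _
    refine ⟨M, by rw [← frame_restrict hM, hMN], fun i ↦ ?_⟩
    by_cases hi : i ∈ Set.range e
    · obtain ⟨l, rfl⟩ := hi
      rw [← Function.comp_apply (f := x), ← hN l, ← hMN]
      rfl
    · simp [mul_apply, hM i hi, hx i hi]

lemma isFrameNormSq_eigenvalues_iff [DecidableEq n] (hS : S.IsHermitian) :
    IsFrameNormSq (diagonal (RCLike.ofReal ∘ hS.eigenvalues) : Matrix n n 𝕜) x ↔
      IsFrameNormSq S x := by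
  constructor <;> intro h
  · rw [hS.spectral_theorem, Unitary.conjStarAlgAut_apply]
    exact h.unitary_conj _
  · rw [← hS.conjStarAlgAut_star_eigenvectorUnitary, Unitary.conjStarAlgAut_star_apply]
    simpa only [Unitary.coe_star, star_star] using h.unitary_conj (star hS.eigenvectorUnitary)

lemma isFrameNormSq_diagonal_self [DecidableEq n] {μ : n → ℝ} (hμ : ∀ l, 0 ≤ μ l) :
    IsFrameNormSq (diagonal (RCLike.ofReal ∘ μ) : Matrix n n 𝕜) μ := by
  have sqrt_mul_sqrt (l : n) : ((√(μ l) : ℝ) : 𝕜) * (√(μ l) : ℝ) = μ l := by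
    rw [← RCLike.ofReal_mul, Real.mul_self_sqrt (hμ l)]
  exact ⟨diagonal fun l ↦ ((√(μ l) : ℝ) : 𝕜),
    by simp [diagonal_conjTranspose, Pi.star_def, sqrt_mul_sqrt, comp_def],
    by simp [diagonal_conjTranspose, Pi.star_def, sqrt_mul_sqrt]⟩

end FrameNorms

section Transform

variable {ι n : Type*} [Fintype ι] [DecidableEq ι] [Fintype n]

/-- Conjugating `A` by a diagonal unitary turns one chosen entry by any phase. -/
lemma exists_unitary_conj_im_eq_zero (A : Matrix ι ι ℂ) {i j : ι} (hij : i ≠ j) :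
    ∃ U : unitaryGroup ι ℂ, (∀ l, (star (U : Matrix ι ι ℂ) * A * U) l l = A l l) ∧
      ((star (U : Matrix ι ι ℂ) * A * U) i j).im = 0 := by
  obtain ⟨ω, hω, hnorm⟩ := RCLike.exists_norm_eq_mul_self (A i j)
  set u : ι → ℂ := update 1 j ω with hu
  have u_mul_star (l : ι) : u l * star (u l) = 1 := by
    obtain rfl | hl := eq_or_ne l j
    · simp [hu, Complex.mul_conj, Complex.normSq_eq_norm_sq, hω]
    · simp [hu, hl]
  have conj_apply (k l : ι) : (star (diagonal u) * A * diagonal u) k l =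
      star (u k) * A k l * u l := by
    rw [star_eq_conjTranspose, diagonal_conjTranspose, mul_diagonal, diagonal_mul, Pi.star_apply]
  refine ⟨⟨diagonal u, mem_unitaryGroup_iff.mpr ?_⟩, fun l ↦ ?_, ?_⟩
  · rw [star_eq_conjTranspose, diagonal_conjTranspose, diagonal_mul_diagonal]
    simp only [Pi.star_apply, u_mul_star, diagonal_one]
  · rw [conj_apply]
    linear_combination A l l * u_mul_star l
  · have : ω * A i j = ((‖A i j‖ : ℝ) : ℂ) := hnorm.symm
    rw [conj_apply, hu, update_self, update_of_ne hij, Pi.one_apply, star_one, one_mul, mul_comm,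
      this, Complex.ofReal_im]

/-- The unitary is `c + s I P`, where `P` is the permutation matrix of the swap. -/
lemma exists_unitary_conj_diag_of_im_eq_zero {A : Matrix ι ι ℂ} (hA : A.IsHermitian) {i j : ι}
    (hij : (A i j).im = 0) {c s : ℝ} (hcs : c ^ 2 + s ^ 2 = 1) :
    ∃ U : unitaryGroup ι ℂ, ∀ l, (star (U : Matrix ι ι ℂ) * A * U) l l =
      c ^ 2 * A l l + s ^ 2 * A (Equiv.swap i j l) (Equiv.swap i j l) := by
  have hcs' : (c : ℂ) ^ 2 + (s : ℂ) ^ 2 = 1 := by exact_mod_cast hcs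
  set P : Matrix ι ι ℂ := Matrix.swap ℂ i j with hP
  have P_mul (B : Matrix ι ι ℂ) : P * B = B.submatrix (Equiv.swap i j) id :=
    PEquiv.toMatrix_toPEquiv_mul _ _
  have mul_P (B : Matrix ι ι ℂ) : B * P = B.submatrix id (Equiv.swap i j) :=
    PEquiv.mul_toMatrix_toPEquiv _ _
  set R : Matrix ι ι ℂ := (c : ℂ) • 1 + (s * Complex.I) • P with hR
  have star_R : star R = (c : ℂ) • 1 - (s * Complex.I) • P := by
    simp [hR, star_eq_conjTranspose, hP, conjTranspose_swap, sub_eq_add_neg]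
  have hAij : A i j = A j i := (Complex.conj_eq_iff_im.mpr hij).symm.trans (hA.apply j i)
  have symm_apply (l : ι) : A l (Equiv.swap i j l) = A (Equiv.swap i j l) l := by
    rw [Equiv.swap_apply_def]
    split_ifs with h h' <;> simp [*]
  have R_mul_star : R * star R = 1 := calc
    R * star R = (c ^ 2 : ℂ) • 1 - (s * Complex.I) ^ 2 • (P * P) := by
      rw [star_R, hR]
      simp only [add_mul, mul_sub, smul_mul_smul_comm, mul_one, one_mul, sq,
        mul_comm (s * Complex.I)]
      abel
    _ = ((c : ℂ) ^ 2 + s ^ 2) • 1 := by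
      rw [hP, swap_mul_self, mul_pow, Complex.I_sq]
      module
    _ = 1 := by rw [hcs', one_smul]
  have conj_apply (l : ι) : (star R * A * R) l l =
      c ^ 2 * A l l + s ^ 2 * A (Equiv.swap i j l) (Equiv.swap i j l) := by
    rw [star_R, hR]
    simp only [Complex.coe_smul, sub_mul, smul_mul_assoc, one_mul, P_mul, mul_add,
      mul_smul_comm, mul_one, mul_P, Matrix.add_apply, Matrix.smul_apply, Matrix.sub_apply,
      Complex.real_smul, submatrix_apply, id_eq, smul_eq_mul, symm_apply]
    linear_combination (-s ^ 2 * A (Equiv.swap i j l) (Equiv.swap i j l)) * Complex.I_sq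
  exact ⟨⟨R, mem_unitaryGroup_iff.mpr R_mul_star⟩, conj_apply⟩

lemma exists_unitary_conj_diag_tTransform {A : Matrix ι ι ℂ} (hA : A.IsHermitian) (i j : ι)
    {t : ℝ} (ht0 : 0 ≤ t) (ht1 : t ≤ 1) :
    ∃ U : unitaryGroup ι ℂ, ∀ l, (star (U : Matrix ι ι ℂ) * A * U) l l =
      (1 - t) * A l l + t * A (Equiv.swap i j l) (Equiv.swap i j l) := by
  obtain rfl | hij := eq_or_ne i j
  · refine ⟨1, fun l ↦ ?_⟩
    simp only [OneMemClass.coe_one, star_one, one_mul, mul_one, Equiv.swap_self, Equiv.refl_apply]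
    ring
  obtain ⟨U, hU, him⟩ := exists_unitary_conj_im_eq_zero A hij
  have hA' : (star (U : Matrix ι ι ℂ) * A * U).IsHermitian :=
    isHermitian_conjTranspose_mul_mul _ hA
  have hcs : √(1 - t) ^ 2 + √t ^ 2 = 1 := by
    rw [Real.sq_sqrt ht0, Real.sq_sqrt (sub_nonneg.mpr ht1), sub_add_cancel]
  obtain ⟨V, hV⟩ := exists_unitary_conj_diag_of_im_eq_zero hA' him hcs
  refine ⟨U * V, fun l ↦ ?_⟩
  have conj_mul : star ((U * V : unitaryGroup ι ℂ) : Matrix ι ι ℂ) * A *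
      (U * V : unitaryGroup ι ℂ) =
      star (V : Matrix ι ι ℂ) * (star (U : Matrix ι ι ℂ) * A * U) * V := by
    simp only [Submonoid.coe_mul, star_mul, Matrix.mul_assoc]
  rw [conj_mul, hV, hU, hU, ← Complex.ofReal_pow, ← Complex.ofReal_pow, Real.sq_sqrt ht0,
    Real.sq_sqrt (sub_nonneg.mpr ht1), Complex.ofReal_sub, Complex.ofReal_one]

theorem IsFrameNormSq.of_isTTransform {S : Matrix n n ℂ} {x y : ι → ℝ} (h : IsFrameNormSq S y)
    (hyx : IsTTransform y x) : IsFrameNormSq S x := by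
  obtain ⟨M, rfl, hM⟩ := h
  obtain ⟨i, j, t, ht0, ht1, rfl⟩ := hyx
  obtain ⟨U, hU⟩ :=
    exists_unitary_conj_diag_tTransform (isHermitian_conjTranspose_mul_self M) i j ht0 ht1
  refine ⟨M * (U : Matrix ι ι ℂ), ?_, fun l ↦ ?_⟩
  · rw [conjTranspose_mul, Matrix.mul_assoc, ← Matrix.mul_assoc (U : Matrix ι ι ℂ),
      ← star_eq_conjTranspose (U : Matrix ι ι ℂ), Unitary.mul_star_self_of_mem U.2, Matrix.one_mul]
  · have gram : (M * (U : Matrix ι ι ℂ))ᴴ * (M * (U : Matrix ι ι ℂ)) =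
        star (U : Matrix ι ι ℂ) * (Mᴴ * M) * (U : Matrix ι ι ℂ) := by
      simp only [conjTranspose_mul, star_eq_conjTranspose, Matrix.mul_assoc]
    rw [gram, hU, hM, hM]
    simp

lemma IsFrameNormSq.of_reflTransGen {S : Matrix n n ℂ} {x y : ι → ℝ} (h : IsFrameNormSq S y)
    (hyx : Relation.ReflTransGen IsTTransform y x) : IsFrameNormSq S x := by
  induction hyx with
  | refl => exact h
  | tail _ hstep ih => exact ih.of_isTTransform hstep

end Transform

section Diagonal

variable {ι κ 𝕜 : Type*} [RCLike 𝕜]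

open scoped MatrixOrder in
lemma diag_le_one_of_isStarProjection [Fintype ι] {P : Matrix ι ι 𝕜} (hP : IsStarProjection P)
    (i : ι) : P i i ≤ 1 := by
  classical
  simpa using (Matrix.le_iff.mp hP.le_one).diag_nonneg (i := i)

variable [Fintype ι] [DecidableEq κ] {M : Matrix κ ι 𝕜} {μ : κ → ℝ}

lemma sum_normSq_row_eq (hM : M * Mᴴ = diagonal (RCLike.ofReal ∘ μ)) (l : κ) :
    ∑ i, ‖M l i‖ ^ 2 = μ l := by
  have := congrFun₂ hM l l
  simp only [mul_apply, conjTranspose_apply, RCLike.star_def, RCLike.mul_conj, diagonal_apply_eq,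
    Function.comp_apply] at this
  exact_mod_cast this

variable [Fintype κ]

/-- The matrix `Mᴴ * diagonal μ⁻¹ * M` is the orthogonal projection onto the row space of `M`; the
rows with `μ l = 0` vanish and `0⁻¹ = 0` discards them. -/
lemma sum_normSq_col_mul_inv_le_one (hM : M * Mᴴ = diagonal (RCLike.ofReal ∘ μ)) (i : ι) :
    ∑ l, ‖M l i‖ ^ 2 * (μ l)⁻¹ ≤ 1 := by
  classical
  set D : Matrix κ κ 𝕜 := diagonal (RCLike.ofReal ∘ μ⁻¹) with hD
  have hDD : D * (M * Mᴴ) * D = D := by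
    rw [hM, hD, diagonal_mul_diagonal, diagonal_mul_diagonal, diagonal_eq_diagonal_iff]
    intro l
    simpa using mul_inv_mul_cancel ((μ l : 𝕜)⁻¹)
  have proj : IsStarProjection (Mᴴ * D * M) := by
    refine ⟨?_, ?_⟩
    · calc Mᴴ * D * M * (Mᴴ * D * M) = Mᴴ * (D * (M * Mᴴ) * D) * M := by
            simp only [Matrix.mul_assoc]
        _ = Mᴴ * D * M := by rw [hDD]
    · refine isHermitian_conjTranspose_mul_mul M ?_
      exact isHermitian_diagonal_of_self_adjoint _ (by ext; simp)
  have diag_eq : (Mᴴ * D * M) i i = (∑ l, ‖M l i‖ ^ 2 * (μ l)⁻¹ : ℝ) := by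
    rw [Matrix.mul_apply]
    push_cast
    refine sum_congr rfl fun l _ ↦ ?_
    simp only [hD, mul_diagonal, conjTranspose_apply, RCLike.star_def, ← RCLike.conj_mul,
      Function.comp_apply, Pi.inv_apply, RCLike.ofReal_inv]
    ring
  exact_mod_cast diag_eq ▸ diag_le_one_of_isStarProjection proj i

/-- The weight of `μ l` is the part of the `l`-th row of `M`, normalized, that lies in the columns
indexed by `s`. -/
lemma IsFrameNormSq.exists_weights {x : ι → ℝ}
    (h : IsFrameNormSq (diagonal (RCLike.ofReal ∘ μ) : Matrix κ κ 𝕜) x) (hμ : ∀ l, 0 ≤ μ l)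
    (s : Finset ι) : ∃ w : κ → ℝ, (∀ l, 0 ≤ w l) ∧ (∀ l, w l ≤ 1) ∧ ∑ l, w l ≤ #s ∧
      ∑ i ∈ s, x i = ∑ l, w l * μ l := by
  obtain ⟨M, hM, hx⟩ := h
  have mass_le (l : κ) : ∑ i ∈ s, ‖M l i‖ ^ 2 ≤ μ l := by
    rw [← sum_normSq_row_eq hM l]
    exact sum_le_univ_sum_of_nonneg fun _ ↦ by positivity
  have mass_nonneg (l : κ) : 0 ≤ ∑ i ∈ s, ‖M l i‖ ^ 2 := by positivity
  refine ⟨fun l ↦ (∑ i ∈ s, ‖M l i‖ ^ 2) * (μ l)⁻¹,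
    fun l ↦ mul_nonneg (mass_nonneg l) (inv_nonneg.mpr (hμ l)),
    fun l ↦ mul_inv_le_one_of_le₀ (mass_le l) (hμ l), ?_, ?_⟩
  · calc ∑ l, (∑ i ∈ s, ‖M l i‖ ^ 2) * (μ l)⁻¹ = ∑ i ∈ s, ∑ l, ‖M l i‖ ^ 2 * (μ l)⁻¹ := by
          simp only [sum_mul, sum_comm (s := s)]
      _ ≤ ∑ i ∈ s, 1 := sum_le_sum fun i _ ↦ sum_normSq_col_mul_inv_le_one hM i
      _ = #s := by simp
  · calc ∑ i ∈ s, x i = ∑ l, ∑ i ∈ s, ‖M l i‖ ^ 2 := by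
          simp only [← gram_diag_eq_ofReal_iff.mp (hx _), sum_comm (s := s)]
      _ = ∑ l, (∑ i ∈ s, ‖M l i‖ ^ 2) * (μ l)⁻¹ * μ l := sum_congr rfl fun l _ ↦ by
          rw [← div_eq_mul_inv, div_mul_cancel_of_imp fun h0 ↦
            le_antisymm (h0 ▸ mass_le l) (mass_nonneg l)]

theorem IsFrameNormSq.dominatedBy [LinearOrder ι] [LocallyFiniteOrderBot ι] {x z : ι → ℝ}
    (h : IsFrameNormSq (diagonal (RCLike.ofReal ∘ μ) : Matrix κ κ 𝕜) x) (hμ : ∀ l, 0 ≤ μ l)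
    (hz : Antitone z) (hzμ : IsZeroPadding z μ) : DominatedBy x z := by
  have hz0 : ∀ i, 0 ≤ z i := hzμ.nonneg hμ
  refine ⟨fun j ↦ ?_, ?_⟩
  · obtain ⟨w, hw0, hw1, hw, hxw⟩ := h.exists_weights hμ (Iic j)
    obtain ⟨e, rfl, -⟩ := hzμ
    exact hxw.trans_le (sum_mul_comp_le_sum_Iic hz hz0 e hw0 hw1 hw)
  · have trace_eq := h.sum_eq_trace
    simp only [trace_diagonal, Function.comp_apply] at trace_eq
    rw [hzμ.sum_eq]
    exact_mod_cast trace_eq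

end Diagonal

theorem isFrameNormSq_iff_dominatedBy {ι n : Type*} [Fintype ι] [LinearOrder ι]
    [LocallyFiniteOrderBot ι] [Fintype n] [DecidableEq n] {S : Matrix n n ℂ} (hS : S.PosSemidef)
    {x z : ι → ℝ} (hx : Antitone x) (hz : Antitone z)
    (hzS : IsZeroPadding z hS.isHermitian.eigenvalues) :
    IsFrameNormSq S x ↔ DominatedBy x z := by
  rw [← isFrameNormSq_eigenvalues_iff hS.isHermitian]
  refine ⟨fun h ↦ h.dominatedBy hS.eigenvalues_nonneg hz hzS, fun h ↦ ?_⟩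
  have hzframe : IsFrameNormSq (diagonal (RCLike.ofReal ∘ hS.isHermitian.eigenvalues) :
      Matrix n n ℂ) z :=
    hzS.isFrameNormSq_iff.mpr (isFrameNormSq_diagonal_self hS.eigenvalues_nonneg)
  exact hzframe.of_reflTransGen (h.reflTransGen_isTTransform hx)

theorem stmt_0 {d k : ℕ} (B : Matrix (Fin d) (Fin d) ℂ) (hB : B.PosSemidef)
    (a : Fin k → ℝ) (ha : ∀ i, 0 < a i) :
    (∃ G : Fin k → Fin d → ℂ, frameOp G = B ∧ ∀ i, normSqVec (G i) = a i) ↔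
      MajorizedByPad a (eigsDesc B) := by
  have ha_pad : IsZeroPadding (sortDesc (pad a (max k d))) a :=
    isZeroPadding_sortDesc_pad a (le_max_left k d)
  have hB_pad : IsZeroPadding (sortDesc (pad (eigsDesc B) (max k d))) hB.isHermitian.eigenvalues :=
    (isZeroPadding_sortDesc_pad _ (le_max_right k d)).trans (isZeroPadding_eigsDesc hB.isHermitian)
  rw [exists_frameOp_eq_iff_isFrameNormSq, ← ha_pad.isFrameNormSq_iff,
    isFrameNormSq_iff_dominatedBy hB (sortDesc_antitone _) (sortDesc_antitone _) hB_pad,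
    MajorizedByPad, majorizedBy_iff_dominatedBy_sortDesc]
end

section
/- Let (F_0, a) be initial data for the completion problem in ℂ^d. Then the set of frame operators of completions, SC_a(F_0) = {S_F : F ∈ C_a(F_0)}, equals {S : S is a positive semidefinite d×d matrix, S − S_0 is positive semidefinite, and a ≺ λ(S − S_0)}. -/
open Finset
open scoped ComplexOrder

/-!
Put `B = S - S₀`; the question is which vectors `a` are the squared norms of a sequence `G` with
frame operator `B`. After padding `G` and the spectrum of `B` with zeros, they have the same length.

Majorization is necessary: projecting onto the span of the `g_i` with `i ∈ s` bounds
`∑ i ∈ s, ‖g_i‖²` by the trace of the compression of `B` to a subspace of dimension at most `|s|`,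
hence by `|s| t + ∑ max (λ_m - t) 0` for every `t ≥ 0`. When `t` is the `|s|`-th eigenvalue, this is
the sum of the `|s|` largest eigenvalues.

It is sufficient: `B` is the frame operator of the vectors `√λ_m • u_m` of its eigenbasis, whose
squared norms are the eigenvalues. Any vector majorized by the spectrum is reached from it by
finitely many Robin Hood transfers, and each transfer is realized by rotating two vectors of the
sequence into each other, which leaves the frame operator unchanged.
-/

section Majorization

variable {ι : Type*}

/-- A Robin Hood transfer: an amount `t`, at most the difference `x i - x j`, moves from the
coordinate `i` to the coordinate `j`. Moving the full difference is allowed, so exchanging two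
coordinates is a transfer. -/
def RobinHoodTransfer [DecidableEq ι] (x y : ι → ℝ) : Prop :=
  ∃ i j t, i ≠ j ∧ 0 ≤ t ∧ t ≤ x i - x j ∧ y = x - Pi.single i t + Pi.single j t

open Relation (ReflTransGen)

lemma robinHoodTransfer_comp_swap [DecidableEq ι] (x : ι → ℝ) {i j : ι} (hij : i ≠ j) :
    RobinHoodTransfer x (x ∘ Equiv.swap i j) := by
  wlog hle : x j ≤ x i generalizing i j
  · rw [Equiv.swap_comm]
    exact this hij.symm (le_of_not_ge hle)
  refine ⟨i, j, x i - x j, hij, sub_nonneg.2 hle, le_rfl, funext fun l => ?_⟩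
  rcases eq_or_ne l i with rfl | hli
  · simp [hij]
  rcases eq_or_ne l j with rfl | hlj
  · simp [hli]
  · simp [hli, hlj, Equiv.swap_apply_of_ne_of_ne]

lemma reflTransGen_robinHoodTransfer_comp_perm [Finite ι] [DecidableEq ι] (x : ι → ℝ)
    (σ : Equiv.Perm ι) : ReflTransGen RobinHoodTransfer x (x ∘ σ) := by
  induction σ using Equiv.Perm.swap_induction_on generalizing x with
  | one => exact .refl
  | swap_mul σ i j hij ih =>
    exact .head (robinHoodTransfer_comp_swap x hij) (ih (x ∘ Equiv.swap i j))

lemma sum_sub_single_add_single [DecidableEq ι] (x : ι → ℝ) (t : ℝ) {i j : ι} {s : Finset ι}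
    (hi : i ∈ s) (hj : j ∈ s) :
    ∑ l ∈ s, (x - Pi.single i t + Pi.single j t : ι → ℝ) l = ∑ l ∈ s, x l := by
  simp [sum_add_distrib, sum_sub_distrib, sum_pi_single', hi, hj]

variable [Fintype ι] [LinearOrder ι] [LocallyFiniteOrderBot ι]

lemma exists_surplus_lt_first_deficit {x y : ι → ℝ}
    (hle : ∀ m, ∑ l ∈ Iic m, y l ≤ ∑ l ∈ Iic m, x l) (hsum : ∑ l, y l = ∑ l, x l) (hne : y ≠ x) :
    ∃ i j, i < j ∧ y i < x i ∧ x j < y j ∧ ∀ l < j, y l ≤ x l := by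
  have hdeficit : ∃ j, x j < y j := by
    by_contra! hxy
    have heq := (sum_eq_sum_iff_of_le fun l _ => hxy l).1 hsum
    exact hne (funext fun l => heq l (mem_univ l))
  obtain ⟨j, hj, hfirst⟩ := exists_minimal_of_wellFoundedLT _ hdeficit
  have hbelow : ∀ l < j, y l ≤ x l := fun l hl => le_of_not_gt fun h => (hfirst h hl.le).not_gt hl
  obtain ⟨i, hi, hyx⟩ : ∃ i ∈ Iic j, y i < x i := by
    by_contra! hxy
    exact (hle j).not_gt (sum_lt_sum hxy ⟨j, by simp, hj⟩)
  have hij : i ≠ j := by rintro rfl; exact hyx.not_gt hj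
  exact ⟨i, j, (mem_Iic.1 hi).lt_of_ne hij, hyx, hj, hbelow⟩

/- Transferring as much as possible from a surplus coordinate `i` to the first deficit coordinate
`j` settles one of the two coordinates, and preserves the partial sums from `j` on; before `j`
there is no deficit. -/
lemma exists_robinHoodTransfer_card_ne_lt {x y : ι → ℝ} (hy : Antitone y)
    (hle : ∀ m, ∑ l ∈ Iic m, y l ≤ ∑ l ∈ Iic m, x l) (hsum : ∑ l, y l = ∑ l, x l) (hne : y ≠ x) :
    ∃ z, RobinHoodTransfer x z ∧ (∀ m, ∑ l ∈ Iic m, y l ≤ ∑ l ∈ Iic m, z l) ∧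
      ∑ l, y l = ∑ l, z l ∧ #{l | y l ≠ z l} < #{l | y l ≠ x l} := by
  obtain ⟨i, j, hij, hi, hj, hbelow⟩ := exists_surplus_lt_first_deficit hle hsum hne
  set t := min (x i - y i) (y j - x j) with ht
  have hti : t ≤ x i - y i := min_le_left _ _
  have htj : t ≤ y j - x j := min_le_right _ _
  have ht0 : 0 < t := lt_min (sub_pos.2 hi) (sub_pos.2 hj)
  set z := x - Pi.single i t + Pi.single j t with hz
  have hzi : z i = x i - t := by simp [hz, hij.ne]
  have hzj : z j = x j + t := by simp [hz, hij.ne']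
  have hzl : ∀ l, l ≠ i → l ≠ j → z l = x l := fun l hli hlj => by simp [hz, hli, hlj]
  refine ⟨z, ⟨i, j, t, hij.ne, ht0.le, by linarith [hy hij.le], hz⟩, fun m => ?_, ?_, ?_⟩
  · rcases le_or_gt j m with hjm | hmj
    · rw [sum_sub_single_add_single x t (mem_Iic.2 (hij.le.trans hjm)) (mem_Iic.2 hjm)]
      exact hle m
    · refine sum_le_sum fun l hl => ?_
      have hlj : l < j := (mem_Iic.1 hl).trans_lt hmj
      rcases eq_or_ne l i with rfl | hli
      · linarith
      · exact (hbelow l hlj).trans_eq (hzl l hli hlj.ne).symm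
  · rw [hsum, sum_sub_single_add_single x t (mem_univ i) (mem_univ j)]
  · have hsettled : y i = z i ∨ y j = z j := by
      rcases min_choice (x i - y i) (y j - x j) with h | h
      · left; linarith
      · right; linarith
    refine card_lt_card ((ssubset_iff_of_subset fun l => ?_).2 ?_)
    · simp only [mem_filter_univ]
      rcases eq_or_ne l i with rfl | hli
      · exact fun _ => hi.ne
      rcases eq_or_ne l j with rfl | hlj
      · exact fun _ => hj.ne'
      · rw [hzl l hli hlj]
        exact id
    · rcases hsettled with h | h
      · exact ⟨i, by simpa using hi.ne, by simpa using h⟩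
      · exact ⟨j, by simpa using hj.ne', by simpa using h⟩

theorem reflTransGen_robinHoodTransfer_of_sum_Iic_le {x y : ι → ℝ} (hy : Antitone y)
    (hle : ∀ m, ∑ l ∈ Iic m, y l ≤ ∑ l ∈ Iic m, x l) (hsum : ∑ l, y l = ∑ l, x l) :
    ReflTransGen RobinHoodTransfer x y := by
  induction hn : #{l | y l ≠ x l} using Nat.strong_induction_on generalizing x with
  | _ n ih =>
    rcases eq_or_ne y x with rfl | hne
    · exact .refl
    · obtain ⟨z, hxz, hz, hz_sum, hcard⟩ := exists_robinHoodTransfer_card_ne_lt hy hle hsum hne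
      exact .head hxz (ih _ (hn ▸ hcard) hz hz_sum rfl)

end Majorization

section SortDesc

open Relation (ReflTransGen)

variable {m : ℕ}

lemma antitone_sortDesc (x : Fin m → ℝ) : Antitone (sortDesc x) :=
  fun _ _ hij => Tuple.monotone_sort x (Fin.rev_le_rev.2 hij)

lemma exists_perm_sortDesc_eq (x : Fin m → ℝ) : ∃ σ : Equiv.Perm (Fin m), sortDesc x = x ∘ σ :=
  ⟨Fin.revPerm.trans (Tuple.sort x), rfl⟩

lemma sum_max_sub_of_antitone {L : Fin m → ℝ} (hL : Antitone L) (j : Fin m) :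
    ∑ i, max (L i - L j) 0 = ∑ i ∈ Iic j, (L i - L j) := by
  rw [← sum_subset (subset_univ (Iic j))]
  · exact sum_congr rfl fun i hi => max_eq_left (sub_nonneg.2 (hL (mem_Iic.1 hi)))
  · exact fun i _ hi => max_eq_right (sub_nonpos.2 (hL (not_le.1 (mt mem_Iic.2 hi)).le))

theorem majorizedBy_of_sum_le {x y : Fin m → ℝ}
    (hle : ∀ (s : Finset (Fin m)) j, ∑ i ∈ s, x i ≤ #s * y j + ∑ i, max (y i - y j) 0)
    (hsum : ∑ i, x i = ∑ i, y i) : MajorizedBy x y := by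
  refine ⟨fun j => ?_, hsum⟩
  obtain ⟨σ, hσ⟩ := exists_perm_sortDesc_eq x
  obtain ⟨τ, hτ⟩ := exists_perm_sortDesc_eq y
  calc ∑ i ∈ Iic j, sortDesc x i
      = ∑ i ∈ (Iic j).map σ.toEmbedding, x i := by simp [hσ]
    _ ≤ #(Iic j) * y (τ j) + ∑ i, max (y i - y (τ j)) 0 := by
        simpa only [card_map] using hle ((Iic j).map σ.toEmbedding) (τ j)
    _ = #(Iic j) * sortDesc y j + ∑ i, max (sortDesc y i - sortDesc y j) 0 := by
        rw [hτ, ← Equiv.sum_comp τ]; rfl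
    _ = ∑ i ∈ Iic j, sortDesc y i := by
        rw [sum_max_sub_of_antitone (antitone_sortDesc y), sum_sub_distrib, sum_const, nsmul_eq_mul,
          add_sub_cancel]

theorem MajorizedBy.reflTransGen_robinHoodTransfer {x y : Fin m → ℝ} (h : MajorizedBy x y) :
    ReflTransGen RobinHoodTransfer y x := by
  obtain ⟨σ, hσ⟩ := exists_perm_sortDesc_eq x
  obtain ⟨τ, hτ⟩ := exists_perm_sortDesc_eq y
  have hsum : ∑ i, sortDesc x i = ∑ i, sortDesc y i := by
    simpa [hσ, hτ, Equiv.sum_comp σ, Equiv.sum_comp τ] using h.2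
  have hx : sortDesc x ∘ σ.symm = x := by simp [hσ, Function.comp_assoc]
  calc ReflTransGen RobinHoodTransfer y (sortDesc y) := by
        rw [hτ]; exact reflTransGen_robinHoodTransfer_comp_perm y τ
    ReflTransGen RobinHoodTransfer _ (sortDesc x) :=
        reflTransGen_robinHoodTransfer_of_sum_Iic_le (antitone_sortDesc x) h.1 hsum
    ReflTransGen RobinHoodTransfer _ x := by
        simpa only [hx] using reflTransGen_robinHoodTransfer_comp_perm (sortDesc x) σ.symm

end SortDesc

section Pad

variable {k N : ℕ}

lemma pad_castLE (hkN : k ≤ N) (x : Fin k → ℝ) (i : Fin k) : pad x N (Fin.castLE hkN i) = x i := by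
  simp [pad]

lemma pad_eq_zero_of_le (x : Fin k → ℝ) {i : Fin N} (hi : k ≤ i) : pad x N i = 0 := by
  simp [pad, hi]

lemma pad_nonneg {x : Fin k → ℝ} (hx : ∀ i, 0 ≤ x i) (i : Fin N) : 0 ≤ pad x N i := by
  unfold pad
  split_ifs
  exacts [hx _, le_rfl]

lemma sum_castLE {M : Type*} [AddCommMonoid M] (hkN : k ≤ N) {f : Fin N → M}
    (hf : ∀ i : Fin N, k ≤ i → f i = 0) : ∑ i : Fin k, f (Fin.castLE hkN i) = ∑ i, f i :=
  Fintype.sum_of_injective _ (Fin.castLE_injective hkN) _ _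
    (fun i hi => hf i (not_lt.1 fun h => hi ⟨⟨i, h⟩, rfl⟩)) fun _ => rfl

lemma sum_comp_pad {M : Type*} [AddCommMonoid M] (hkN : k ≤ N) (x : Fin k → ℝ) {f : ℝ → M}
    (hf : f 0 = 0) : ∑ i, f (pad x N i) = ∑ i, f (x i) := by
  rw [← sum_castLE hkN fun i hi => by rw [pad_eq_zero_of_le x hi, hf]]
  simp only [pad_castLE]

end Pad

section KyFan

variable {𝕜 E ι κ : Type*} [RCLike 𝕜] [NormedAddCommGroup E] [InnerProductSpace 𝕜 E]
  [Fintype ι] [Fintype κ]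

/- The weight of `L m` on the left is at most `1`, and the weights add up to the number of
vectors `e r`. -/
lemma sum_mul_norm_inner_sq_le {e : ι → E} (he : Orthonormal 𝕜 e)
    (u : OrthonormalBasis κ 𝕜 E) (L : κ → ℝ) (t : ℝ) :
    ∑ r, ∑ m, L m * ‖inner 𝕜 (u m) (e r)‖ ^ 2 ≤ Fintype.card ι * t + ∑ m, max (L m - t) 0 := by
  have hweight_le (m : κ) : ∑ r, ‖inner 𝕜 (u m) (e r)‖ ^ 2 ≤ 1 := by
    simpa [norm_inner_symm] using he.sum_inner_products_le (u m) (s := univ)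
  have hweight_sum : ∑ m, ∑ r, ‖inner 𝕜 (u m) (e r)‖ ^ 2 = Fintype.card ι := by
    rw [sum_comm]
    simp [u.sum_sq_norm_inner_right, he.norm_eq_one]
  calc ∑ r, ∑ m, L m * ‖inner 𝕜 (u m) (e r)‖ ^ 2
      = ∑ m, (t * ∑ r, ‖inner 𝕜 (u m) (e r)‖ ^ 2 + (L m - t) * ∑ r, ‖inner 𝕜 (u m) (e r)‖ ^ 2) := by
        rw [sum_comm]
        simp only [← mul_sum, ← add_mul, add_sub_cancel]
    _ ≤ ∑ m, (t * ∑ r, ‖inner 𝕜 (u m) (e r)‖ ^ 2 + max (L m - t) 0) := by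
        gcongr with m
        calc (L m - t) * ∑ r, ‖inner 𝕜 (u m) (e r)‖ ^ 2
            ≤ max (L m - t) 0 * ∑ r, ‖inner 𝕜 (u m) (e r)‖ ^ 2 := by gcongr; exact le_max_left _ _
          _ ≤ max (L m - t) 0 := mul_le_of_le_one_right (le_max_right _ _) (hweight_le m)
    _ = Fintype.card ι * t + ∑ m, max (L m - t) 0 := by
        rw [sum_add_distrib, ← mul_sum, hweight_sum, mul_comm]

theorem sum_norm_sq_le_of_sum_norm_inner_sq_eq {g : ι → E} (u : OrthonormalBasis κ 𝕜 E)
    {L : κ → ℝ} (hg : ∀ v, ∑ i, ‖inner 𝕜 (g i) v‖ ^ 2 = ∑ m, L m * ‖inner 𝕜 (u m) v‖ ^ 2)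
    (s : Finset ι) {t : ℝ} (ht : 0 ≤ t) :
    ∑ i ∈ s, ‖g i‖ ^ 2 ≤ #s * t + ∑ m, max (L m - t) 0 := by
  classical
  let V := Submodule.span 𝕜 (s.image g : Set E)
  let b := stdOrthonormalBasis 𝕜 V
  have hb : Orthonormal 𝕜 fun r => (b r : E) :=
    b.orthonormal.comp_linearIsometry V.subtypeₗᵢ
  have hparseval : ∀ i ∈ s, ∑ r, ‖inner 𝕜 (g i) (b r)‖ ^ 2 = ‖g i‖ ^ 2 := fun i hi =>
    b.sum_sq_norm_inner_left ⟨g i, Submodule.subset_span (by simpa using ⟨i, hi, rfl⟩)⟩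
  have hdim : (Fintype.card (Fin (Module.finrank 𝕜 V)) : ℝ) ≤ #s := by
    rw [Fintype.card_fin]
    exact_mod_cast (finrank_span_finset_le_card (s.image g)).trans card_image_le
  calc ∑ i ∈ s, ‖g i‖ ^ 2
      = ∑ i ∈ s, ∑ r, ‖inner 𝕜 (g i) (b r)‖ ^ 2 := (sum_congr rfl hparseval).symm
    _ ≤ ∑ i, ∑ r, ‖inner 𝕜 (g i) (b r)‖ ^ 2 :=
        sum_le_univ_sum_of_nonneg fun i => by positivity
    _ = ∑ r, ∑ m, L m * ‖inner 𝕜 (u m) (b r)‖ ^ 2 := by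
        rw [sum_comm]
        exact sum_congr rfl fun r _ => hg (b r)
    _ ≤ Fintype.card (Fin (Module.finrank 𝕜 V)) * t + ∑ m, max (L m - t) 0 :=
        sum_mul_norm_inner_sq_le hb u L t
    _ ≤ #s * t + ∑ m, max (L m - t) 0 := by gcongr

end KyFan

section FrameOperator

open Matrix

variable {d n : ℕ}

lemma normSqVec_eq_norm_sq (g : Fin d → ℂ) : normSqVec g = ‖WithLp.toLp 2 g‖ ^ 2 := by
  simp [normSqVec, EuclideanSpace.norm_sq_eq, Complex.normSq_eq_norm_sq]

lemma normSqVec_eq_zero {g : Fin d → ℂ} : normSqVec g = 0 ↔ g = 0 := by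
  simp [normSqVec_eq_norm_sq]

lemma trace_vecMulVec_star_self (g : Fin d → ℂ) : (vecMulVec g (star g)).trace = normSqVec g := by
  simp [trace_vecMulVec, dotProduct, normSqVec, Complex.mul_conj]

lemma posSemidef_frameOp (F : Fin n → Fin d → ℂ) : (frameOp F).PosSemidef :=
  posSemidef_sum _ fun l _ => posSemidef_vecMulVec_self_star (F l)

lemma trace_frameOp (F : Fin n → Fin d → ℂ) :
    (frameOp F).trace = ((∑ l, normSqVec (F l) : ℝ) : ℂ) := by
  simp only [frameOp, trace_sum, trace_vecMulVec_star_self, Complex.ofReal_sum]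

lemma star_dotProduct_frameOp_mulVec (F : Fin n → Fin d → ℂ) (v : EuclideanSpace ℂ (Fin d)) :
    star v.ofLp ⬝ᵥ frameOp F *ᵥ v.ofLp =
      ((∑ l, ‖inner ℂ (WithLp.toLp 2 (F l)) v‖ ^ 2 : ℝ) : ℂ) := by
  simp only [frameOp, sum_mulVec, dotProduct_sum, vecMulVec_mulVec, Complex.ofReal_sum]
  refine sum_congr rfl fun l _ => ?_
  have hinner : star (F l) ⬝ᵥ v.ofLp = inner ℂ (WithLp.toLp 2 (F l)) v := by
    rw [EuclideanSpace.inner_eq_star_dotProduct, dotProduct_comm]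
  have hconj : star v.ofLp ⬝ᵥ F l = star (inner ℂ (WithLp.toLp 2 (F l)) v) := by
    rw [← hinner, star_dotProduct]
  rw [hinner, op_smul_eq_smul, dotProduct_smul, hconj, smul_eq_mul, Complex.star_def,
    Complex.mul_conj']
  norm_cast

lemma frameOp_sqrt_eigenvalues_smul_eigenvectorBasis {B : Matrix (Fin d) (Fin d) ℂ}
    (hB : B.PosSemidef) :
    frameOp (fun m => (√(hB.isHermitian.eigenvalues m) : ℂ) •
      (hB.isHermitian.eigenvectorBasis m).ofLp) = B := by
  conv_rhs => rw [hB.isHermitian.spectral_theorem, Unitary.conjStarAlgAut_apply]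
  ext p q
  rw [Matrix.mul_apply]
  simp only [frameOp, Matrix.sum_apply, vecMulVec_apply, mul_diagonal, star_apply, Pi.smul_apply,
    Pi.star_apply, smul_eq_mul, star_mul', Complex.star_def, Complex.conj_ofReal,
    Matrix.IsHermitian.eigenvectorUnitary_apply, Function.comp_apply, Complex.coe_algebraMap]
  refine sum_congr rfl fun m _ => ?_
  have hsqrt : (√(hB.isHermitian.eigenvalues m) : ℂ) ^ 2 = hB.isHermitian.eigenvalues m := by
    exact_mod_cast Real.sq_sqrt (hB.eigenvalues_nonneg m)
  rw [← hsqrt]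
  ring

lemma eigsDesc_nonneg {B : Matrix (Fin d) (Fin d) ℂ} (hB : B.PosSemidef) (m : Fin d) :
    0 ≤ eigsDesc B m := by
  rw [eigsDesc, dif_pos hB.isHermitian]
  exact hB.eigenvalues_nonneg _

lemma exists_orthonormalBasis_frameOp_eq {B : Matrix (Fin d) (Fin d) ℂ} (hB : B.PosSemidef) :
    ∃ u : OrthonormalBasis (Fin d) ℂ (EuclideanSpace ℂ (Fin d)),
      frameOp (fun m => (√(eigsDesc B m) : ℂ) • (u m).ofLp) = B := by
  obtain ⟨σ, hσ⟩ : ∃ σ : Equiv.Perm (Fin d), eigsDesc B = hB.isHermitian.eigenvalues ∘ σ := by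
    rw [eigsDesc, dif_pos hB.isHermitian]
    exact exists_perm_sortDesc_eq _
  refine ⟨hB.isHermitian.eigenvectorBasis.reindex σ.symm, ?_⟩
  conv_rhs => rw [← frameOp_sqrt_eigenvalues_smul_eigenvectorBasis hB, frameOp, ← Equiv.sum_comp σ]
  simp [frameOp, hσ]

lemma exists_rotation_normSqVec_eq {g h : Fin d → ℂ} {r : ℝ}
    (hr : r ∈ Set.Icc (normSqVec h) (normSqVec g)) :
    ∃ u v : Fin d → ℂ, normSqVec u = r ∧
      vecMulVec u (star u) + vecMulVec v (star v) =
        vecMulVec g (star g) + vecMulVec h (star h) := by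
  let u (θ : ℝ) : Fin d → ℂ := (Real.cos θ : ℂ) • g + (Real.sin θ : ℂ) • h
  let v (θ : ℝ) : Fin d → ℂ := -(Real.sin θ : ℂ) • g + (Real.cos θ : ℂ) • h
  have hcont : Continuous fun θ => normSqVec (u θ) := by
    simp only [normSqVec_eq_norm_sq, u]
    fun_prop
  obtain ⟨θ, -, hθ⟩ := intermediate_value_Icc' (by positivity : 0 ≤ Real.pi / 2)
    hcont.continuousOn (by simpa [u, -Complex.ofReal_cos, -Complex.ofReal_sin] using hr)
  refine ⟨u θ, v θ, hθ, ?_⟩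
  have hcs : (Real.cos θ : ℂ) ^ 2 + (Real.sin θ : ℂ) ^ 2 = 1 := by
    exact_mod_cast Real.cos_sq_add_sin_sq θ
  ext p q
  simp only [Matrix.add_apply, vecMulVec_apply, Pi.star_apply, Pi.add_apply, Pi.smul_apply,
    smul_eq_mul, u, v, star_add, star_mul', star_neg, Complex.star_def, Complex.conj_ofReal]
  linear_combination (g p * (starRingEnd ℂ) (g q) + h p * (starRingEnd ℂ) (h q)) * hcs

lemma frameOp_update_update (G : Fin n → Fin d → ℂ) {i j : Fin n} (hij : i ≠ j) {u v : Fin d → ℂ}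
    (huv : vecMulVec u (star u) + vecMulVec v (star v) =
      vecMulVec (G i) (star (G i)) + vecMulVec (G j) (star (G j))) :
    frameOp (Function.update (Function.update G i u) j v) = frameOp G := by
  rw [← sub_eq_zero, frameOp, frameOp, ← sum_sub_distrib, Fintype.sum_eq_add i j hij]
  · simp only [Function.update_self, Function.update_of_ne hij]
    rw [sub_add_sub_comm, huv, sub_self]
  · rintro l ⟨hli, hlj⟩
    simp [hli, hlj]

/-- The vectors of squared norms `(‖g_1‖², …, ‖g_n‖²)` of the sequences of `n` vectors with frame
operator `B`. -/
def frameNormSqs (B : Matrix (Fin d) (Fin d) ℂ) (n : ℕ) : Set (Fin n → ℝ) :=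
  {x | ∃ G : Fin n → Fin d → ℂ, (∀ i, normSqVec (G i) = x i) ∧ frameOp G = B}

variable {B : Matrix (Fin d) (Fin d) ℂ}

lemma RobinHoodTransfer.mem_frameNormSqs {x y : Fin n → ℝ} (hxy : RobinHoodTransfer x y)
    (hx : x ∈ frameNormSqs B n) : y ∈ frameNormSqs B n := by
  obtain ⟨i, j, t, hij, ht, htx, rfl⟩ := hxy
  obtain ⟨G, hG, rfl⟩ := hx
  obtain ⟨u, v, hu, huv⟩ : ∃ u v : Fin d → ℂ, normSqVec u = x i - t ∧ _ :=
    exists_rotation_normSqVec_eq (g := G i) (h := G j) ⟨by rw [hG]; linarith, by rw [hG]; linarith⟩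
  have hv : normSqVec v = x j + t := by
    have htrace := congrArg trace huv
    simp only [trace_add, trace_vecMulVec_star_self, hG, hu] at htrace
    norm_cast at htrace
    linarith
  refine ⟨Function.update (Function.update G i u) j v, fun l => ?_, frameOp_update_update G hij huv⟩
  rcases eq_or_ne l j with rfl | hlj
  · simp [hv, hij.symm]
  rcases eq_or_ne l i with rfl | hli
  · simp [hu, hlj]
  · simp [hG, hli, hlj]

lemma MajorizedBy.mem_frameNormSqs {x y : Fin n → ℝ} (hxy : MajorizedBy x y)
    (hy : y ∈ frameNormSqs B n) : x ∈ frameNormSqs B n := by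
  have htransfers := hxy.reflTransGen_robinHoodTransfer
  clear hxy
  induction htransfers with
  | refl => exact hy
  | tail _ hstep ih => exact hstep.mem_frameNormSqs ih

lemma pad_mem_frameNormSqs_iff {k N : ℕ} (hkN : k ≤ N) {a : Fin k → ℝ} :
    pad a N ∈ frameNormSqs B N ↔ a ∈ frameNormSqs B k := by
  constructor
  · rintro ⟨G, hG, rfl⟩
    refine ⟨fun i => G (Fin.castLE hkN i), fun i => by rw [hG, pad_castLE],
      sum_castLE hkN (f := fun i => vecMulVec (G i) (star (G i))) fun i hi => ?_⟩
    have hGi : G i = 0 := normSqVec_eq_zero.1 (by rw [hG, pad_eq_zero_of_le a hi])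
    simp [hGi]
  · rintro ⟨G, hG, rfl⟩
    refine ⟨fun i => if h : (i : ℕ) < k then G ⟨i, h⟩ else 0, fun i => ?_, ?_⟩
    · beta_reduce
      unfold pad
      split_ifs
      exacts [hG _, normSqVec_eq_zero.2 rfl]
    · unfold frameOp
      rw [← sum_castLE hkN fun i hi => by simp [hi.not_gt]]
      simp

lemma eigsDesc_mem_frameNormSqs (hB : B.PosSemidef) : eigsDesc B ∈ frameNormSqs B d := by
  obtain ⟨u, hu⟩ := exists_orthonormalBasis_frameOp_eq hB
  refine ⟨_, fun i => ?_, hu⟩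
  simp [normSqVec_eq_norm_sq, norm_smul, Real.sq_sqrt (eigsDesc_nonneg hB i)]

lemma sum_le_of_mem_frameNormSqs (hB : B.PosSemidef) {x : Fin n → ℝ} (hx : x ∈ frameNormSqs B n)
    (s : Finset (Fin n)) {t : ℝ} (ht : 0 ≤ t) :
    ∑ i ∈ s, x i ≤ #s * t + ∑ m, max (eigsDesc B m - t) 0 := by
  obtain ⟨G, hG, hGB⟩ := hx
  obtain ⟨u, hu⟩ := exists_orthonormalBasis_frameOp_eq hB
  simp only [← hG, normSqVec_eq_norm_sq]
  refine sum_norm_sq_le_of_sum_norm_inner_sq_eq u (fun v => ?_) s ht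
  have hquad := star_dotProduct_frameOp_mulVec G v
  rw [hGB, ← hu, star_dotProduct_frameOp_mulVec, Complex.ofReal_inj] at hquad
  rw [← hquad]
  simp [mul_pow, Real.sq_sqrt, eigsDesc_nonneg hB]

lemma sum_eq_sum_of_mem_frameNormSqs {n' : ℕ} {x : Fin n → ℝ} {y : Fin n' → ℝ}
    (hx : x ∈ frameNormSqs B n) (hy : y ∈ frameNormSqs B n') :
    ∑ i, x i = ∑ i, y i := by
  obtain ⟨G, hG, rfl⟩ := hx
  obtain ⟨H, hH, hHG⟩ := hy
  have htrace := congrArg trace hHG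
  simp only [trace_frameOp, hG, hH, Complex.ofReal_inj] at htrace
  exact htrace.symm

theorem mem_frameNormSqs_iff_majorizedByPad (hB : B.PosSemidef) {k : ℕ} {a : Fin k → ℝ} :
    a ∈ frameNormSqs B k ↔ MajorizedByPad a (eigsDesc B) := by
  have hdN : d ≤ max k d := le_max_right k d
  have hpad : pad (eigsDesc B) (max k d) ∈ frameNormSqs B (max k d) :=
    (pad_mem_frameNormSqs_iff hdN).2 (eigsDesc_mem_frameNormSqs hB)
  rw [← pad_mem_frameNormSqs_iff (le_max_left k d)]
  refine ⟨fun ha => majorizedBy_of_sum_le (fun s j => ?_) (sum_eq_sum_of_mem_frameNormSqs ha hpad),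
    fun h => h.mem_frameNormSqs hpad⟩
  have hj : 0 ≤ pad (eigsDesc B) (max k d) j := pad_nonneg (eigsDesc_nonneg hB) j
  rw [sum_comp_pad hdN (eigsDesc B) (f := fun z => max (z - pad (eigsDesc B) _ j) 0)
    (by simpa using hj)]
  exact sum_le_of_mem_frameNormSqs hB ha s hj

end FrameOperator

theorem stmt_1_general {d n₀ k : ℕ} (F₀ : Fin n₀ → Fin d → ℂ) (a : Fin k → ℝ) :
    {S : Matrix (Fin d) (Fin d) ℂ |
        ∃ G : Fin k → Fin d → ℂ, (∀ i, normSqVec (G i) = a i) ∧ S = frameOp F₀ + frameOp G} =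
      {S : Matrix (Fin d) (Fin d) ℂ | S.PosSemidef ∧ (S - frameOp F₀).PosSemidef ∧
        MajorizedByPad a (eigsDesc (S - frameOp F₀))} := by
  ext S
  constructor
  · rintro ⟨G, hG, rfl⟩
    simp only [Set.mem_ofPred_eq, add_sub_cancel_left]
    exact ⟨(posSemidef_frameOp F₀).add (posSemidef_frameOp G), posSemidef_frameOp G,
      (mem_frameNormSqs_iff_majorizedByPad (posSemidef_frameOp G)).1 ⟨G, hG, rfl⟩⟩
  · rintro ⟨-, hpos, hmaj⟩
    obtain ⟨G, hG, hGS⟩ := (mem_frameNormSqs_iff_majorizedByPad hpos).2 hmaj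
    exact ⟨G, hG, by rw [hGS, add_sub_cancel]⟩

theorem stmt_1 {d n₀ k : ℕ} (F₀ : Fin n₀ → Fin d → ℂ) (a : Fin k → ℝ)
    (ha_pos : ∀ i, 0 < a i) (ha_mono : Antitone a)
    (hk : d - (frameOp F₀).rank ≤ k) :
    {S : Matrix (Fin d) (Fin d) ℂ |
        ∃ G : Fin k → Fin d → ℂ, (∀ i, normSqVec (G i) = a i) ∧ S = frameOp F₀ + frameOp G} =
      {S : Matrix (Fin d) (Fin d) ℂ | S.PosSemidef ∧ (S - frameOp F₀).PosSemidef ∧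
        MajorizedByPad a (eigsDesc (S - frameOp F₀))} :=
  stmt_1_general F₀ a
end
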